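/- Let Ω ≠ 0 and ΔΩ, φ, τ be real numbers with τ > 0, let M ≥ 1 be a natural number, set T := Mτ, Ω' := Ω + ΔΩ, and φ' := φ − Ωτ/2 − ΔΩ·T/2. Then Σ_{m=1}^{M} ∫_{(m−1)τ}^{mτ} cos(Ω' m τ − Ω t + φ') dt = τ · (sin(Ωτ/2)/(Ωτ/2)) · Σ_{m=1}^{M} cos(ΔΩ(mτ − T/2) + φ). -/

import Mathlib

theorem stmt_14 (Ω ΔΩ φ τ : ℝ) (hΩ : Ω ≠ 0) (hτ : 0 < τ) (M : ℕ) (hM : 1 ≤ M)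
    (T Ω' φ' : ℝ) (hT : T = M * τ) (hΩ' : Ω' = Ω + ΔΩ)
    (hφ' : φ' = φ - Ω * τ / 2 - ΔΩ * T / 2) :
    (∑ m ∈ Finset.Icc 1 M,
        ∫ t in (((m : ℝ) - 1) * τ)..((m : ℝ) * τ), Real.cos (Ω' * m * τ - Ω * t + φ')) =
      τ * (Real.sin (Ω * τ / 2) / (Ω * τ / 2)) *
        ∑ m ∈ Finset.Icc 1 M, Real.cos (ΔΩ * ((m : ℝ) * τ - T / 2) + φ) := by
  rw [Finset.mul_sum]
  refine Finset.sum_congr rfl fun m _ => ?_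
  have hd : ∀ t ∈ Set.uIcc (((m : ℝ) - 1) * τ) ((m : ℝ) * τ),
      HasDerivAt (fun t : ℝ => -(Real.sin (Ω' * m * τ - Ω * t + φ') / Ω))
        (Real.cos (Ω' * m * τ - Ω * t + φ')) t := by
    intro t _
    have h1 : HasDerivAt (fun t : ℝ => Ω' * m * τ - Ω * t + φ') (-(Ω * 1)) t :=
      (((hasDerivAt_id t).const_mul Ω).const_sub (Ω' * m * τ)).add_const φ'
    have h2 := (h1.sin.div_const Ω).neg
    refine h2.congr_deriv ?_
    field_simp
  rw [intervalIntegral.integral_eq_sub_of_hasDerivAt hd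
    (Continuous.intervalIntegrable (by fun_prop) _ _)]
  have e1 : Ω' * m * τ - Ω * ((m : ℝ) * τ) + φ'
      = (ΔΩ * ((m : ℝ) * τ - T / 2) + φ) - Ω * τ / 2 := by
    rw [hφ', hΩ']; ring
  have e2 : Ω' * m * τ - Ω * (((m : ℝ) - 1) * τ) + φ'
      = (ΔΩ * ((m : ℝ) * τ - T / 2) + φ) + Ω * τ / 2 := by
    rw [hφ', hΩ']; ring
  simp only [e1, e2]
  rw [Real.sin_sub, Real.sin_add _ (Ω * τ / 2)]
  generalize Real.sin (Ω * τ / 2) = s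
  generalize Real.cos (Ω * τ / 2) = c
  generalize Real.sin (ΔΩ * ((m : ℝ) * τ - T / 2) + φ) = a
  generalize Real.cos (ΔΩ * ((m : ℝ) * τ - T / 2) + φ) = b
  have hτ0 := hτ.ne'
  field_simp
  ring
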